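/- Let (X,d,f) be a TDS, μ a Borel probability measure on X, K ⊆ X a Borel set, α ≥ 0, φ : X → ℝ a positive continuous function, and s ∈ (0,∞). If P_μ^α(f,x,φ) ≥ s for all x ∈ K and μ(K) > 0, then dim_BS^α(f,K,φ) ≥ s. -/

import Mathlib

open Filter Set MeasureTheory ENNReal
open scoped Classical NNReal

noncomputable section

namespace AlphaBS

variable {X : Type*}

/-- Birkhoff sum `S_n φ (x) = ∑_{j<n} φ(f^j x)`. -/
def birk (f : X → X) (φ : X → ℝ) (n : ℕ) (x : X) : ℝ :=
  ∑ j ∈ Finset.range n, φ (f^[j] x)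

/-- The α-Bowen ball `B_n^α(x,ε) = {y : d_n^α(x,y) < ε}`, where
`d_n^α(x,y) = max_{0 ≤ i ≤ n-1} e^{αi} d(f^i x, f^i y)`, w.r.t. an explicit distance `d`. -/
def bowenBall (d : X → X → ℝ) (f : X → X) (α : ℝ) (n : ℕ) (x : X) (ε : ℝ) : Set X :=
  {y | ∀ i < n, Real.exp (α * i) * d (f^[i] x) (f^[i] y) < ε}

section covers

variable (d : X → X → ℝ) (f : X → X)

/-- `M^α(K,s,ε,n,φ)`: infimum over countable families of α-Bowen balls covering `K`. -/
def Mpre (φ : X → ℝ) (α s ε : ℝ) (N : ℕ) (K : Set X) : ℝ≥0∞ :=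
  ⨅ (c : ℕ → X) (m : ℕ → ℕ) (I : Set ℕ) (_ : I.Nonempty) (_ : ∀ i ∈ I, N ≤ m i)
    (_ : K ⊆ ⋃ i ∈ I, bowenBall d f α (m i) (c i) ε),
    ∑' i : I, ENNReal.ofReal
      (Real.exp (-s * sSup (birk f φ (m i) '' bowenBall d f α (m i) (c i) ε)))

/-- `M^α(K,s,ε,φ) = lim_{n→∞} M^α(K,s,ε,n,φ)` (the quantity is nondecreasing in `n`). -/
def Mlim (φ : X → ℝ) (α s ε : ℝ) (K : Set X) : ℝ≥0∞ := ⨆ N : ℕ, Mpre d f φ α s ε N K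

/-- `M^α(K,ε,φ) = inf {s ≥ 0 : M^α(K,s,ε,φ) = 0}`. -/
def Mcrit (φ : X → ℝ) (α ε : ℝ) (K : Set X) : EReal :=
  ⨅ (s : ℝ) (_ : 0 ≤ s) (_ : Mlim d f φ α s ε K = 0), (s : EReal)

/-- The α-BS dimension `dim_BS^α(f,K,φ) = lim_{ε→0} M^α(K,ε,φ)`
(the quantity is nonincreasing in `ε`). -/
def dimBS (φ : X → ℝ) (α : ℝ) (K : Set X) : EReal :=
  ⨆ (ε : ℝ) (_ : 0 < ε), Mcrit d f φ α ε K

/-- `M^{α,1}(K,s,ε,n,φ)`: the variant with weights `exp(-s·S_{n_i}φ(x_i))` at the centers. -/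
def M1pre (φ : X → ℝ) (α s ε : ℝ) (N : ℕ) (K : Set X) : ℝ≥0∞ :=
  ⨅ (c : ℕ → X) (m : ℕ → ℕ) (I : Set ℕ) (_ : I.Nonempty) (_ : ∀ i ∈ I, N ≤ m i)
    (_ : K ⊆ ⋃ i ∈ I, bowenBall d f α (m i) (c i) ε),
    ∑' i : I, ENNReal.ofReal (Real.exp (-s * birk f φ (m i) (c i)))

def M1lim (φ : X → ℝ) (α s ε : ℝ) (K : Set X) : ℝ≥0∞ := ⨆ N : ℕ, M1pre d f φ α s ε N K

def M1crit (φ : X → ℝ) (α ε : ℝ) (K : Set X) : EReal :=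
  ⨅ (s : ℝ) (_ : 0 ≤ s) (_ : M1lim d f φ α s ε K = 0), (s : EReal)

/-- The modified α-BS dimension `\widetilde{dim}_{BS}^α(f,K,φ)`. -/
def dimBS1 (φ : X → ℝ) (α : ℝ) (K : Set X) : EReal :=
  ⨆ (ε : ℝ) (_ : 0 < ε), M1crit d f φ α ε K

/-- `M^α(K,s,ε,n,1)`: covering quantity with weights `exp(-s n_i)`. -/
def Epre (α s ε : ℝ) (N : ℕ) (K : Set X) : ℝ≥0∞ :=
  ⨅ (c : ℕ → X) (m : ℕ → ℕ) (I : Set ℕ) (_ : I.Nonempty) (_ : ∀ i ∈ I, N ≤ m i)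
    (_ : K ⊆ ⋃ i ∈ I, bowenBall d f α (m i) (c i) ε),
    ∑' i : I, ENNReal.ofReal (Real.exp (-s * (m i : ℝ)))

def Elim (α s ε : ℝ) (K : Set X) : ℝ≥0∞ := ⨆ N : ℕ, Epre d f α s ε N K

def Ecrit (α ε : ℝ) (K : Set X) : EReal :=
  ⨅ (s : ℝ) (_ : 0 ≤ s) (_ : Elim d f α s ε K = 0), (s : EReal)

/-- The α-Bowen topological entropy `h_top^{α,B}(f,K)` (i.e. `dim_BS^α(f,K,1)`,
computed with weights `exp(-s n_i)`). -/
def entB (α : ℝ) (K : Set X) : EReal := ⨆ (ε : ℝ) (_ : 0 < ε), Ecrit d f α ε K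

/-- `ℳ_B^α(K,s,ε,n,h)`: the Pesin pressure covering quantity. -/
def Ppre (h : X → ℝ) (α s ε : ℝ) (N : ℕ) (K : Set X) : ℝ≥0∞ :=
  ⨅ (c : ℕ → X) (m : ℕ → ℕ) (I : Set ℕ) (_ : I.Nonempty) (_ : ∀ i ∈ I, N ≤ m i)
    (_ : K ⊆ ⋃ i ∈ I, bowenBall d f α (m i) (c i) ε),
    ∑' i : I, ENNReal.ofReal
      (Real.exp (-s * (m i : ℝ) + sSup (birk f h (m i) '' bowenBall d f α (m i) (c i) ε)))

def Plim (h : X → ℝ) (α s ε : ℝ) (K : Set X) : ℝ≥0∞ := ⨆ N : ℕ, Ppre d f h α s ε N K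

/-- `ℳ_B^α(K,ε,h) = inf {s ∈ ℝ : ℳ_B^α(K,s,ε,h) = 0}`. -/
def Pcrit (h : X → ℝ) (α ε : ℝ) (K : Set X) : EReal :=
  ⨅ (s : ℝ) (_ : Plim d f h α s ε K = 0), (s : EReal)

/-- The α-Pesin topological pressure `P_B^α(f,K,h)`. -/
def pressureB (h : X → ℝ) (α : ℝ) (K : Set X) : EReal :=
  ⨆ (ε : ℝ) (_ : 0 < ε), Pcrit d f h α ε K

/-- `W^α(K,s,ε,n,φ)`: the weighted covering quantity. -/
def Wpre (φ : X → ℝ) (α s ε : ℝ) (N : ℕ) (K : Set X) : ℝ≥0∞ :=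
  ⨅ (c : ℕ → X) (m : ℕ → ℕ) (w : ℕ → ℝ) (I : Set ℕ) (_ : I.Nonempty)
    (_ : ∀ i ∈ I, N ≤ m i) (_ : ∀ i ∈ I, 0 < w i)
    (_ : ∀ x ∈ K, (1 : ℝ≥0∞) ≤
      ∑' i : I, (bowenBall d f α (m i) (c i) ε).indicator
        (fun _ => ENNReal.ofReal (w i)) x),
    ∑' i : I, ENNReal.ofReal (w i * Real.exp (-s * birk f φ (m i) (c i)))

def Wlim (φ : X → ℝ) (α s ε : ℝ) (K : Set X) : ℝ≥0∞ := ⨆ N : ℕ, Wpre d f φ α s ε N K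

def Wcrit (φ : X → ℝ) (α ε : ℝ) (K : Set X) : EReal :=
  ⨅ (s : ℝ) (_ : 0 ≤ s) (_ : Wlim d f φ α s ε K = 0), (s : EReal)

/-- The weighted α-BS dimension `dim_BS^{α,W}(f,K,φ)`. -/
def dimBSW (φ : X → ℝ) (α : ℝ) (K : Set X) : EReal :=
  ⨆ (ε : ℝ) (_ : 0 < ε), Wcrit d f φ α ε K

/-- `r_n(f,α,X,ε)`: the smallest cardinality of an `(n,α,ε)`-spanning set of `X`. -/
def spanNum (α ε : ℝ) (n : ℕ) : ℕ :=
  sInf {m : ℕ | ∃ E : Finset X, E.card = m ∧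
    ∀ x : X, ∃ y ∈ E, ∀ i < n, Real.exp (α * i) * d (f^[i] y) (f^[i] x) < ε}

/-- `h_top^α(f,X,ε) = limsup_n (1/n) log r_n(f,α,X,ε)`. -/
def htopSpanE (α ε : ℝ) : EReal :=
  limsup (fun n : ℕ => ((Real.log (spanNum d f α ε n) / n : ℝ) : EReal)) atTop

/-- the α-topological entropy `h_top^α(f,X) = lim_{ε→0} h_top^α(f,X,ε)`
(the quantity is nonincreasing in `ε`). -/
def htopSpan (α : ℝ) : EReal := ⨆ (ε : ℝ) (_ : 0 < ε), htopSpanE d f α ε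

/-- `r_n(X, e^{-nε})`: smallest number of ε-neutralized Bowen balls needed to cover `X`. -/
def neutNum (ε : ℝ) (n : ℕ) : ℕ :=
  sInf {m : ℕ | ∃ E : Finset X, E.card = m ∧
    ∀ x : X, ∃ y ∈ E, ∀ j < n, d (f^[j] y) (f^[j] x) < Real.exp (-(n : ℝ) * ε)}

/-- the neutralized ε-topological entropy. -/
def neutEntE (ε : ℝ) : EReal :=
  limsup (fun n : ℕ => ((Real.log (neutNum d f ε n) / n : ℝ) : EReal)) atTop

/-- the neutralized topological entropy `\tilde h_top(f,X) = inf_{ε>0} \tilde h_top(f,X,ε)`. -/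
def neutEnt : EReal := ⨅ (ε : ℝ) (_ : 0 < ε), neutEntE d f ε

end covers

/-- `-log t`, valued in `[0,∞]` for `t ∈ [0,1]`, with `-log 0 = ∞`. -/
def negLog (t : ℝ≥0∞) : ℝ≥0∞ := if t = 0 then ⊤ else ENNReal.ofReal (-Real.log t.toReal)

section measure

variable [MeasurableSpace X]

/-- `P_μ^α(f,x,φ) = lim_{ε→0} liminf_n (-log μ(B_n^α(x,ε)))/S_nφ(x)`. -/
def localBKphi (d : X → X → ℝ) (f : X → X) (φ : X → ℝ) (α : ℝ) (μ : Measure X)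
    (x : X) : ℝ≥0∞ :=
  ⨆ (ε : ℝ) (_ : 0 < ε),
    liminf (fun n : ℕ =>
      negLog (μ (bowenBall d f α n x ε)) / ENNReal.ofReal (birk f φ n x)) atTop

/-- The α-local Brin–Katok entropy `P_μ^α(f,φ) = ∫ P_μ^α(f,x,φ) dμ(x)`. -/
def BKphi (d : X → X → ℝ) (f : X → X) (φ : X → ℝ) (α : ℝ) (μ : Measure X) : ℝ≥0∞ :=
  ∫⁻ x, localBKphi d f φ α μ x ∂μ

/-- `lim_{ε→0} liminf_n (-log μ(B_n^α(x,ε)))/n`. -/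
def localBKn (d : X → X → ℝ) (f : X → X) (α : ℝ) (μ : Measure X) (x : X) : ℝ≥0∞ :=
  ⨆ (ε : ℝ) (_ : 0 < ε),
    liminf (fun n : ℕ => negLog (μ (bowenBall d f α n x ε)) / (n : ℝ≥0∞)) atTop

/-- The lower α-local Brin–Katok entropy `\underline h_μ^{BK}(f,α)`. -/
def BKn (d : X → X → ℝ) (f : X → X) (α : ℝ) (μ : Measure X) : ℝ≥0∞ :=
  ∫⁻ x, localBKn d f α μ x ∂μ

end measure

/-- diameter of a set w.r.t. an explicit distance. -/
def ediamD (d : X → X → ℝ) (U : Set X) : ℝ≥0∞ :=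
  ⨆ (x ∈ U) (y ∈ U), ENNReal.ofReal (d x y)

/-- pre-Hausdorff measure at scale `δ`. -/
def hausPre (d : X → X → ℝ) (s δ : ℝ) (E : Set X) : ℝ≥0∞ :=
  ⨅ (U : ℕ → Set X) (_ : E ⊆ ⋃ i, U i) (_ : ∀ i, ediamD d (U i) ≤ ENNReal.ofReal δ),
    ∑' i, ediamD d (U i) ^ s

/-- `s`-dimensional Hausdorff measure w.r.t. an explicit distance. -/
def hausMeas (d : X → X → ℝ) (s : ℝ) (E : Set X) : ℝ≥0∞ :=
  ⨆ (δ : ℝ) (_ : 0 < δ), hausPre d s δ E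

/-- Hausdorff dimension w.r.t. an explicit distance:
`dim_H(E,d) = inf {s ≥ 0 : H^s(E) = 0}`. -/
def hausDim (d : X → X → ℝ) (E : Set X) : ℝ≥0∞ :=
  ⨅ (s : ℝ≥0) (_ : hausMeas d s E = 0), (s : ℝ≥0∞)

/-- The left shift on `Σ_k^+ = {0,…,k-1}^ℕ`. -/
def shiftMap (k : ℕ) : (ℕ → Fin k) → (ℕ → Fin k) := fun x n => x (n + 1)

/-- The metric `d(x,y) = e^{-n(x,y)}` on `Σ_k^+`, where `n(x,y)` is the least index
at which `x` and `y` differ, and `d(x,x) = 0`. -/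
def shiftDist {k : ℕ} (x y : ℕ → Fin k) : ℝ :=
  if x = y then 0 else Real.exp (-((sInf {n : ℕ | x n ≠ y n} : ℕ) : ℝ))

/-- The subshift of finite type `Σ_A^+` determined by the incidence matrix `A`. -/
def SFT {k : ℕ} (A : Matrix (Fin k) (Fin k) ℝ) : Type :=
  {x : ℕ → Fin k // ∀ n, A (x n) (x (n + 1)) = 1}

/-- The left shift restricted to `Σ_A^+`. -/
def sftShift {k : ℕ} (A : Matrix (Fin k) (Fin k) ℝ) : SFT A → SFT A :=
  fun x => ⟨fun n => x.1 (n + 1), fun n => x.2 (n + 1)⟩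

/-- The metric `d` restricted to `Σ_A^+`. -/
def sftDist {k : ℕ} (A : Matrix (Fin k) (Fin k) ℝ) : SFT A → SFT A → ℝ :=
  fun x y => shiftDist x.1 y.1

end AlphaBS

open AlphaBS

/-!
The argument is the mass distribution principle. For `t` below the local entropy, almost all of `K`
is exhausted by the sets of points `x` whose Bowen balls satisfy
`μ (B_n^α(x, ρ)) ≤ exp (-t S_n φ(x))` for every `n ≥ N`; one of these sets meets `K` in positive
measure. A ball of radius `ρ / 2` through such a point lies in its ball of radius `ρ`, so it carries
mass at most `exp (-t S_n φ(x))`. Uniform continuity of `log φ` makes the oscillation of `φ`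
multiplicatively small along Bowen balls, so `t S_n φ(x)` dominates `r` times the supremum of
`S_n φ` over the small ball for any `r < t`. Hence the covering sums of exponent `r` stay above a
positive mass.
-/

namespace AlphaBS

section BowenBall

variable {X : Type*} {f : X → X} {α : ℝ} {n : ℕ}

theorem bowenBall_subset_bowenBall (d : X → X → ℝ) (x : X) {ε ε' : ℝ} (h : ε ≤ ε') :
    bowenBall d f α n x ε ⊆ bowenBall d f α n x ε' :=
  fun _ hy i hi => (hy i hi).trans_le h

variable [PseudoMetricSpace X]

theorem bowenBall_subset_of_mem {c y : X} {ε : ℝ} (hy : y ∈ bowenBall dist f α n c ε) :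
    bowenBall dist f α n c ε ⊆ bowenBall dist f α n y (2 * ε) := by
  intro z hz i hi
  calc Real.exp (α * i) * dist (f^[i] y) (f^[i] z)
      ≤ Real.exp (α * i) * (dist (f^[i] c) (f^[i] y) + dist (f^[i] c) (f^[i] z)) := by
        gcongr
        exact dist_triangle_left ..
    _ < 2 * ε := by linarith [hy i hi, hz i hi]

theorem dist_iterate_lt_of_mem_bowenBall {x y : X} {ε : ℝ} (hα : 0 ≤ α)
    (hy : y ∈ bowenBall dist f α n x ε) {i : ℕ} (hi : i < n) :
    dist (f^[i] x) (f^[i] y) < ε :=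
  (le_mul_of_one_le_left dist_nonneg (Real.one_le_exp (by positivity))).trans_lt (hy i hi)

end BowenBall

section BirkhoffSum

variable {X : Type*} {f : X → X} {φ : X → ℝ} {α : ℝ} {n : ℕ}

theorem birk_nonneg (hφ : ∀ x, 0 ≤ φ x) (x : X) : 0 ≤ birk f φ n x :=
  Finset.sum_nonneg fun _ _ => hφ _

theorem birk_pos (hφ : ∀ x, 0 < φ x) (hn : 0 < n) (x : X) : 0 < birk f φ n x :=
  Finset.sum_pos (fun _ _ => hφ _) (Finset.nonempty_range_iff.2 hn.ne')

variable [PseudoMetricSpace X]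

theorem exists_pos_forall_dist_lt_le_mul (hφ : ∀ x, 0 < φ x)
    (hlog : UniformContinuous fun x => Real.log (φ x)) {q : ℝ} (hq : 1 < q) :
    ∃ δ > 0, ∀ a b, dist a b < δ → φ a ≤ q * φ b := by
  obtain ⟨δ, hδ, hδφ⟩ := Metric.uniformContinuous_iff.1 hlog (Real.log q) (Real.log_pos hq)
  refine ⟨δ, hδ, fun a b hab => ?_⟩
  have hq0 : 0 < q := zero_lt_one.trans hq
  have hlt : Real.log (φ a) - Real.log (φ b) < Real.log q := (abs_lt.1 (hδφ hab)).2
  rw [← Real.log_le_log_iff (hφ a) (mul_pos hq0 (hφ b)), Real.log_mul hq0.ne' (hφ b).ne']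
  linarith

theorem birk_le_mul_birk_of_mem_bowenBall (hα : 0 ≤ α) {δ q : ℝ}
    (hφδ : ∀ a b, dist a b < δ → φ a ≤ q * φ b) {x y : X}
    (hy : y ∈ bowenBall dist f α n x δ) : birk f φ n y ≤ q * birk f φ n x := by
  simp only [birk, Finset.mul_sum]
  refine Finset.sum_le_sum fun i hi => hφδ _ _ ?_
  rw [dist_comm]
  exact dist_iterate_lt_of_mem_bowenBall hα hy (Finset.mem_range.1 hi)

theorem sSup_birk_image_bowenBall_le (hα : 0 ≤ α) {ε q : ℝ}
    (hφε : ∀ a b, dist a b < 2 * ε → φ a ≤ q * φ b) {c x : X}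
    (hx : x ∈ bowenBall dist f α n c ε) :
    sSup (birk f φ n '' bowenBall dist f α n c ε) ≤ q * birk f φ n x :=
  csSup_le ⟨_, mem_image_of_mem _ hx⟩ <| forall_mem_image.2 fun _ hz =>
    birk_le_mul_birk_of_mem_bowenBall hα hφε (bowenBall_subset_of_mem hx hz)

end BirkhoffSum

-- Pitfall: `negLog p` is truncated to `0` for `p ≥ 1`, including `p = ⊤`.
theorem le_ofReal_exp_neg_of_ofReal_le_negLog {p : ℝ≥0∞} {a : ℝ} (ha : 0 < a)
    (h : ENNReal.ofReal a ≤ negLog p) : p ≤ ENNReal.ofReal (Real.exp (-a)) := by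
  rcases eq_or_ne p 0 with rfl | hp0
  · exact zero_le
  rw [negLog, if_neg hp0, ENNReal.ofReal_le_ofReal_iff'] at h
  have hlog : a ≤ -Real.log p.toReal := h.resolve_right ha.not_ge
  have hptop : p ≠ ⊤ := by
    rintro rfl
    simp only [toReal_top, Real.log_zero, neg_zero] at hlog
    exact ha.not_ge hlog
  have hexp : p.toReal ≤ Real.exp (-a) :=
    (Real.log_le_iff_le_exp (toReal_pos hp0 hptop)).1 (le_neg_of_le_neg hlog)
  exact (ofReal_toReal hptop).ge.trans (ofReal_le_ofReal hexp)

section DecaySet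

variable {X : Type*} [MeasurableSpace X]

/-- The points at which the upper bound `μ (B_n^α(x, ρ)) ≤ exp (-t S_n φ(x))` expressing that the
local Brin–Katok entropy exceeds `t` already holds from time `N` on, at the fixed scale `ρ`. -/
def decaySet (d : X → X → ℝ) (f : X → X) (φ : X → ℝ) (α : ℝ) (μ : Measure X)
    (t ρ : ℝ) (N : ℕ) : Set X :=
  {x | ∀ n ≥ N, μ (bowenBall d f α n x ρ) ≤ ENNReal.ofReal (Real.exp (-(t * birk f φ n x)))}

variable {f : X → X} {φ : X → ℝ} {α t : ℝ} {μ : Measure X}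

theorem exists_mem_decaySet_of_lt_localBKphi {d : X → X → ℝ} (hφ : ∀ x, 0 < φ x) (ht : 0 < t)
    {ρ : ℕ → ℝ} (hρ : Tendsto ρ atTop (nhds 0)) {x : X}
    (hx : ENNReal.ofReal t < localBKphi d f φ α μ x) :
    ∃ k, x ∈ decaySet d f φ α μ t (ρ k) k := by
  obtain ⟨ε, hε, hliminf⟩ : ∃ ε, ∃ _ : 0 < ε, ENNReal.ofReal t < liminf (fun n : ℕ =>
      negLog (μ (bowenBall d f α n x ε)) / ENNReal.ofReal (birk f φ n x)) atTop := by
    simpa only [localBKphi, lt_iSup_iff] using hx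
  have hdecay : ∀ᶠ n in atTop,
      μ (bowenBall d f α n x ε) ≤ ENNReal.ofReal (Real.exp (-(t * birk f φ n x))) := by
    filter_upwards [eventually_lt_of_lt_liminf hliminf, eventually_gt_atTop 0] with n hn hn0
    refine le_ofReal_exp_neg_of_ofReal_le_negLog (mul_pos ht (birk_pos hφ hn0 x)) ?_
    rw [ofReal_mul ht.le]
    exact mul_le_of_le_div hn.le
  obtain ⟨k, hk, hρk⟩ :=
    ((eventually_forall_ge_atTop.2 hdecay).and (hρ.eventually_lt_const hε)).exists
  exact ⟨k, fun n hn => (measure_mono (bowenBall_subset_bowenBall d x hρk.le)).trans (hk n hn)⟩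

variable [PseudoMetricSpace X] {r ε q : ℝ} {N : ℕ}

theorem measure_decaySet_inter_bowenBall_le (hα : 0 ≤ α) (hφ : ∀ x, 0 ≤ φ x)
    (hφε : ∀ a b, dist a b < 2 * ε → φ a ≤ q * φ b) (hr : 0 ≤ r) (hrq : r * q ≤ t)
    {n : ℕ} (hn : N ≤ n) (c : X) :
    μ (decaySet dist f φ α μ t (2 * ε) N ∩ bowenBall dist f α n c ε) ≤
      ENNReal.ofReal (Real.exp (-r * sSup (birk f φ n '' bowenBall dist f α n c ε))) := by
  rcases (decaySet dist f φ α μ t (2 * ε) N ∩ bowenBall dist f α n c ε).eq_empty_or_nonempty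
    with hempty | ⟨x, hxdecay, hxball⟩
  · simp [hempty]
  have hsup : r * sSup (birk f φ n '' bowenBall dist f α n c ε) ≤ t * birk f φ n x :=
    calc r * sSup (birk f φ n '' bowenBall dist f α n c ε)
        ≤ r * (q * birk f φ n x) :=
          mul_le_mul_of_nonneg_left (sSup_birk_image_bowenBall_le hα hφε hxball) hr
      _ = r * q * birk f φ n x := (mul_assoc ..).symm
      _ ≤ t * birk f φ n x := mul_le_mul_of_nonneg_right hrq (birk_nonneg hφ x)
  calc μ (decaySet dist f φ α μ t (2 * ε) N ∩ bowenBall dist f α n c ε)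
      ≤ μ (bowenBall dist f α n x (2 * ε)) :=
        measure_mono (inter_subset_right.trans (bowenBall_subset_of_mem hxball))
    _ ≤ ENNReal.ofReal (Real.exp (-(t * birk f φ n x))) := hxdecay n hn
    _ ≤ ENNReal.ofReal (Real.exp (-r * sSup (birk f φ n '' bowenBall dist f α n c ε))) := by
        rw [neg_mul]
        gcongr

theorem measure_inter_decaySet_le_Mpre (hα : 0 ≤ α) (hφ : ∀ x, 0 ≤ φ x)
    (hφε : ∀ a b, dist a b < 2 * ε → φ a ≤ q * φ b) (hr : 0 ≤ r) (hrq : r * q ≤ t) (K : Set X) :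
    μ (K ∩ decaySet dist f φ α μ t (2 * ε) N) ≤ Mpre dist f φ α r ε N K := by
  simp only [Mpre, le_iInf_iff]
  intro c m I _ hm hcover
  have hsub : K ∩ decaySet dist f φ α μ t (2 * ε) N ⊆
      ⋃ i : I, decaySet dist f φ α μ t (2 * ε) N ∩ bowenBall dist f α (m i) (c i) ε := by
    rw [← inter_iUnion, iUnion_coe_set]
    exact fun x hx => ⟨hx.2, hcover hx.1⟩
  exact (measure_mono hsub).trans <| (measure_iUnion_le _).trans <| ENNReal.tsum_le_tsum fun i =>
    measure_decaySet_inter_bowenBall_le hα hφ hφε hr hrq (hm i i.2) (c i)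

end DecaySet

section Dimension

variable {X : Type*} {d : X → X → ℝ} {f : X → X} {φ : X → ℝ} {α : ℝ} {K : Set X}

theorem Mpre_le_Mlim {s ε : ℝ} (N : ℕ) : Mpre d f φ α s ε N K ≤ Mlim d f φ α s ε K :=
  le_iSup (fun N => Mpre d f φ α s ε N K) N

theorem le_Mcrit_of_forall_lt {t ε : ℝ} (h : ∀ r, 0 ≤ r → r < t → Mlim d f φ α r ε K ≠ 0) :
    (t : EReal) ≤ Mcrit d f φ α ε K :=
  le_iInf₂ fun r hr => le_iInf fun hzero =>
    EReal.coe_le_coe_iff.2 <| not_lt.1 fun hrt => h r hr hrt hzero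

theorem Mcrit_le_dimBS {ε : ℝ} (hε : 0 < ε) : Mcrit d f φ α ε K ≤ dimBS d f φ α K :=
  le_iSup₂ (f := fun ε (_ : 0 < ε) => Mcrit d f φ α ε K) ε hε

theorem dimBS_nonneg : 0 ≤ dimBS d f φ α K :=
  (le_Mcrit_of_forall_lt fun _ hr hr' => absurd hr' hr.not_gt).trans (Mcrit_le_dimBS one_pos)

theorem le_dimBS_of_forall_lt_localBKphi [PseudoMetricSpace X] [MeasurableSpace X]
    {μ : Measure X} (hα : 0 ≤ α) (hφ : ∀ x, 0 < φ x)
    (hlog : UniformContinuous fun x => Real.log (φ x)) (hμK : μ K ≠ 0) {r t : ℝ} (hr : 0 < r)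
    (hrt : r < t) (ht : ∀ x ∈ K, ENNReal.ofReal t < localBKphi dist f φ α μ x) :
    (r : EReal) ≤ dimBS dist f φ α K := by
  obtain ⟨δ, hδ, hφδ⟩ := exists_pos_forall_dist_lt_le_mul hφ hlog ((one_lt_div hr).2 hrt)
  obtain ⟨ε, -, hεmem, hεlim⟩ := exists_seq_strictAnti_tendsto' (half_pos hδ)
  have hρ : Tendsto (fun k => 2 * ε k) atTop (nhds 0) := by
    simpa only [mul_zero] using hεlim.const_mul 2
  have hKsub : K ⊆ ⋃ k, K ∩ decaySet dist f φ α μ t (2 * ε k) k := by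
    rw [← inter_iUnion]
    exact fun x hx => ⟨hx, mem_iUnion.2 <|
      exists_mem_decaySet_of_lt_localBKphi hφ (hr.trans hrt) hρ (ht x hx)⟩
  obtain ⟨k, hk⟩ := exists_measure_pos_of_not_measure_iUnion_null
    fun hnull => hμK (measure_mono_null hKsub hnull)
  refine (le_Mcrit_of_forall_lt fun r' hr' hr'r => ?_).trans (Mcrit_le_dimBS (hεmem k).1)
  have hr't : r' * (t / r) ≤ t :=
    calc r' * (t / r) ≤ r * (t / r) :=
          mul_le_mul_of_nonneg_right hr'r.le (div_pos (hr.trans hrt) hr).le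
      _ = t := mul_div_cancel₀ t hr.ne'
  have hφε : ∀ a b, dist a b < 2 * ε k → φ a ≤ t / r * φ b :=
    fun a b hab => hφδ a b (by linarith [(hεmem k).2])
  have hmass : μ (K ∩ decaySet dist f φ α μ t (2 * ε k) k) ≤ Mpre dist f φ α r' (ε k) k K :=
    measure_inter_decaySet_le_Mpre hα (fun x => (hφ x).le) hφε hr' hr't K
  exact (hk.trans_le (hmass.trans (Mpre_le_Mlim k))).ne'

end Dimension

end AlphaBS

theorem stmt8_general {X : Type*} [PseudoMetricSpace X] [MeasurableSpace X]
    (f : X → X) (μ : Measure X) (K : Set X) (α : ℝ) (hα : 0 ≤ α)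
    (φ : X → ℝ) (hφ : ∀ x, 0 < φ x) (hlog : UniformContinuous fun x => Real.log (φ x))
    (s : ℝ≥0∞) (hμK : μ K ≠ 0) (hlb : ∀ x ∈ K, s ≤ localBKphi dist f φ α μ x) :
    (s : EReal) ≤ dimBS dist f φ α K := by
  refine EReal.ge_of_forall_gt_iff_ge.1 fun r hrs => ?_
  rcases le_or_gt r 0 with hr0 | hr0
  · exact (EReal.coe_nonpos.2 hr0).trans dimBS_nonneg
  have hrs' : ENNReal.ofReal r < s := by
    rwa [← EReal.coe_ennreal_lt_coe_ennreal_iff, EReal.coe_ennreal_ofReal, max_eq_left hr0.le]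
  obtain ⟨t, hrt, hts⟩ := ENNReal.lt_iff_exists_nnreal_btwn.1 hrs'
  rw [← ENNReal.ofReal_coe_nnreal] at hrt hts
  exact le_dimBS_of_forall_lt_localBKphi hα hφ hlog hμK hr0
    (ENNReal.ofReal_lt_ofReal_iff'.1 hrt).1 fun x hx => hts.trans_le (hlb x hx)

/-- Billingsley-type, lower bound: if `P_μ^α(f,x,φ) ≥ s` for all `x ∈ K`
and `μ(K) > 0`, then `dim_BS^α(f,K,φ) ≥ s`. -/
theorem stmt8 {X : Type*} [MetricSpace X] [CompactSpace X]
    [MeasurableSpace X] [BorelSpace X]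
    (f : X → X) (hf : Continuous f) (μ : Measure X) [IsProbabilityMeasure μ]
    (K : Set X) (hK : MeasurableSet K) (α : ℝ) (hα : 0 ≤ α)
    (φ : X → ℝ) (hφc : Continuous φ) (hφ : ∀ x, 0 < φ x)
    (s : ℝ) (hs : 0 < s) (hμK : 0 < μ K)
    (hlb : ∀ x ∈ K, ENNReal.ofReal s ≤ localBKphi dist f φ α μ x) :
    (s : EReal) ≤ dimBS dist f φ α K := by
  have hlog := CompactSpace.uniformContinuous_of_continuous (hφc.log fun x => (hφ x).ne')
  simpa only [EReal.coe_ennreal_ofReal, max_eq_left hs.le] using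
    stmt8_general f μ K α hα φ hφ hlog (ENNReal.ofReal s) hμK.ne' hlb

end
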